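/- With exogenous SU packet arrivals, the throughput regions under the two policy classes coincide: for any SU arrival rates λ_s ≥ 0, the set T_0 := { R ∈ ℝ^S : ∃ r̄ ∈ R̂_0 with 0 ≤ R_s ≤ min(λ_s, r̄_s) for all s } equals the set T_2 := { R ∈ ℝ^S : ∃ r̄ ∈ R_2 with 0 ≤ R_s ≤ min(λ_s, r̄_s) for all s }. -/

import Mathlib

open Finset

/-- Linearized rate region `R̂_0`. -/
def linRegion {S : Type*} [Fintype S] (I : S → ℕ)
    (P rs rp : (s : S) → Fin (I s + 1) → ℝ)
    (Phat : S → ℝ) (lam : ℝ) : Set (S → ℝ) :=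
  {rbar | ∃ qB qE : (s : S) → Fin (I s + 1) → ℝ,
    (∀ s i, 0 ≤ qB s i) ∧ (∀ s i, 0 ≤ qE s i) ∧
    (∑ s, ∑ i, rp s i * qB s i) = lam ∧
    (∀ s, (∑ i, P s i * qE s i) + (∑ i, P s i * qB s i) ≤ Phat s) ∧
    ((∑ s, ∑ i, qE s i) + (∑ s, ∑ i, qB s i)) = 1 ∧
    (∀ s, rbar s = ∑ i, rs s i * qE s i)}

/-- Unconstrained-priority rate region `R_2`. -/
def priorityFreeRegion {S : Type*} [Fintype S] (I : S → ℕ)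
    (P rs rp : (s : S) → Fin (I s + 1) → ℝ)
    (Phat : S → ℝ) (lam : ℝ) : Set (S → ℝ) :=
  {rbar | ∃ p0 p1 : (s : S) → Fin (I s + 1) → ℝ,
    (∀ s i, 0 ≤ p0 s i) ∧ (∀ s i, 0 ≤ p1 s i) ∧
    ((∑ s, ∑ i, p0 s i) + (∑ s, ∑ i, p1 s i)) = 1 ∧
    lam ≤ (∑ s, ∑ i, rp s i * p1 s i) ∧
    (∀ s, (∑ i, P s i * p0 s i) + (∑ i, P s i * p1 s i) ≤ Phat s) ∧
    (∀ s, rbar s = ∑ i, rs s i * p0 s i)}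

/-!
Of the slots that a priority-free policy devotes to the primary user, keep only the fraction `t` for
which the primary service rate is exactly `lam`; in the remaining ones a secondary user is scheduled
with the silent action `0`. Silence costs the least power and earns no secondary rate, so the power
budgets still hold and the rate vector does not change. Hence the rate regions themselves are equal,
even before truncation by the secondary arrival rates.
-/

section RateRegions

open scoped Matrix

theorem sum_add_single_add_sum_smul {R ι : Type*} [Ring R] [Fintype ι] [DecidableEq ι]
    (p q : ι → R) (i₀ : ι) (t : R) :
    ∑ i, (q + Pi.single i₀ ((1 - t) * ∑ i, p i) : ι → R) i + ∑ i, (t • p) i =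
      ∑ i, q i + ∑ i, p i := by
  simp only [Pi.add_apply, Pi.smul_apply, smul_eq_mul, sum_add_distrib, sum_pi_single',
    mem_univ, if_true, ← mul_sum]
  noncomm_ring

theorem mul_sum_le_dotProduct {R ι : Type*} [Semiring R] [PartialOrder R] [IsOrderedRing R]
    [Fintype ι] {c : R} {f p : ι → R} (hf : ∀ i, c ≤ f i) (hp : 0 ≤ p) :
    c * ∑ i, p i ≤ f ⬝ᵥ p := by
  rw [mul_sum]
  exact sum_le_sum fun i _ => mul_le_mul_of_nonneg_right (hf i) (hp i)

theorem dotProduct_add_single_add_dotProduct_smul_le {R ι : Type*} [CommRing R] [PartialOrder R]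
    [IsOrderedRing R] [Fintype ι] [DecidableEq ι] {f p : ι → R} (q : ι → R) {i₀ : ι}
    {t : R} (hf : ∀ i, f i₀ ≤ f i) (hp : 0 ≤ p) (ht : t ≤ 1) :
    f ⬝ᵥ (q + Pi.single i₀ ((1 - t) * ∑ i, p i)) + f ⬝ᵥ (t • p) ≤ f ⬝ᵥ q + f ⬝ᵥ p := by
  have idle_le : (1 - t) * (f i₀ * ∑ i, p i) ≤ (1 - t) * (f ⬝ᵥ p) :=
    mul_le_mul_of_nonneg_left (mul_sum_le_dotProduct hf hp) (sub_nonneg.2 ht)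
  calc
    f ⬝ᵥ (q + Pi.single i₀ ((1 - t) * ∑ i, p i)) + f ⬝ᵥ (t • p)
        = f ⬝ᵥ q + (1 - t) * (f i₀ * ∑ i, p i) + t * (f ⬝ᵥ p) := by
      rw [dotProduct_add, dotProduct_single, dotProduct_smul, smul_eq_mul, mul_left_comm]
    _ ≤ f ⬝ᵥ q + (1 - t) * (f ⬝ᵥ p) + t * (f ⬝ᵥ p) := by gcongr
    _ = f ⬝ᵥ q + f ⬝ᵥ p := by ring

variable {S : Type*} [Fintype S] {I : S → ℕ} {P rs rp : (s : S) → Fin (I s + 1) → ℝ}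
  {Phat : S → ℝ} {lam : ℝ}

theorem linRegion_subset_priorityFreeRegion :
    linRegion I P rs rp Phat lam ⊆ priorityFreeRegion I P rs rp Phat lam := by
  rintro rbar ⟨qB, qE, qB_nonneg, qE_nonneg, service, power, total, rate⟩
  exact ⟨qE, qB, qE_nonneg, qB_nonneg, total, service.ge, power, rate⟩

theorem priorityFreeRegion_subset_linRegion (hP : ∀ s i, P s 0 ≤ P s i) (hrs0 : ∀ s, rs s 0 = 0)
    (hlam : 0 ≤ lam) :
    priorityFreeRegion I P rs rp Phat lam ⊆ linRegion I P rs rp Phat lam := by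
  rintro rbar ⟨p0, p1, p0_nonneg, p1_nonneg, total, service, power, rate⟩
  -- If the service rate is `0`, then so is `lam`, and the junk value `t = 0` is the right one.
  let t := lam / ∑ s, ∑ i, rp s i * p1 s i
  have t_nonneg : 0 ≤ t := div_nonneg hlam (hlam.trans service)
  have t_le_one : t ≤ 1 := div_le_one_of_le₀ service (hlam.trans service)
  have t_mul_service : t * ∑ s, ∑ i, rp s i * p1 s i = lam :=
    div_mul_cancel_of_imp fun h => le_antisymm (service.trans_eq h) hlam
  let idle s := (1 - t) * ∑ i, p1 s i
  have idle_nonneg s : 0 ≤ idle s :=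
    mul_nonneg (sub_nonneg.2 t_le_one) (sum_nonneg fun i _ => p1_nonneg s i)
  have qB_nonneg s : 0 ≤ t • p1 s := smul_nonneg t_nonneg (p1_nonneg s)
  have qE_nonneg s : 0 ≤ p0 s + Pi.single 0 (idle s) :=
    add_nonneg (p0_nonneg s) (Pi.single_nonneg.2 (idle_nonneg s))
  refine ⟨fun s => t • p1 s, fun s => p0 s + Pi.single 0 (idle s),
    qB_nonneg, qE_nonneg, ?_, fun s => ?_, ?_, fun s => ?_⟩
  · simpa only [Pi.smul_apply, smul_eq_mul, mul_left_comm _ t, ← mul_sum] using t_mul_service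
  · exact (dotProduct_add_single_add_dotProduct_smul_le (p0 s) (hP s) (p1_nonneg s)
      t_le_one).trans (power s)
  · rw [← total, ← sum_add_distrib, ← sum_add_distrib]
    exact sum_congr rfl fun s _ => sum_add_single_add_sum_smul (p1 s) (p0 s) 0 t
  · change rbar s = rs s ⬝ᵥ (p0 s + Pi.single 0 (idle s))
    rw [dotProduct_add, dotProduct_single, hrs0, zero_mul, add_zero]
    exact rate s

theorem throughput_regions_coincide_general (hP : ∀ s i, P s 0 ≤ P s i)
    (hrs0 : ∀ s, rs s 0 = 0) (hlam : 0 ≤ lam) :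
    linRegion I P rs rp Phat lam = priorityFreeRegion I P rs rp Phat lam :=
  linRegion_subset_priorityFreeRegion.antisymm (priorityFreeRegion_subset_linRegion hP hrs0 hlam)

end RateRegions

/-- With exogenous SU packet arrivals, the throughput regions under the two
policy classes coincide: `T_0 = T_2`. -/
theorem throughput_regions_coincide
    {S : Type*} [Fintype S] [Nonempty S]
    (I : S → ℕ) (hI : ∀ s, 1 ≤ I s)
    (P rs rp : (s : S) → Fin (I s + 1) → ℝ) (rp0 : ℝ)
    (Phat : S → ℝ) (lam : ℝ)
    (hP0 : ∀ s, P s 0 = 0) (hPnn : ∀ s i, 0 ≤ P s i)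
    (hrs0 : ∀ s, rs s 0 = 0) (hrs : ∀ s i, rs s i ∈ Set.Icc (0:ℝ) 1)
    (hrp : ∀ s i, rp s i ∈ Set.Icc (0:ℝ) 1) (hrp00 : ∀ s, rp s 0 = rp0)
    (hrp0 : rp0 ∈ Set.Icc (0:ℝ) 1)
    (hPhat : ∀ s, 0 ≤ Phat s) (hlam : 0 ≤ lam)
    (lamS : S → ℝ) (hlamS : ∀ s, 0 ≤ lamS s) :
    {R : S → ℝ | ∃ rbar ∈ linRegion I P rs rp Phat lam,
        ∀ s, 0 ≤ R s ∧ R s ≤ min (lamS s) (rbar s)} =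
    {R : S → ℝ | ∃ rbar ∈ priorityFreeRegion I P rs rp Phat lam,
        ∀ s, 0 ≤ R s ∧ R s ≤ min (lamS s) (rbar s)} := by
  rw [throughput_regions_coincide_general (fun s i => (hP0 s).trans_le (hPnn s i)) hrs0 hlam]
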